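/- arXiv:1601.06501 — 3 statements merged into one kernel-verified Lean document; each statement's English description precedes it below -/
import Mathlib

section
/- Let s, g, w ∈ ℕ and let b ≥ gs be a prime. Then the Chen–Skriganov digital net P over F_b consisting of b^{gw} points in [0,1)^s satisfies κ(P) ≥ g + 1 and μ_1(P) ≥ gw + 1. -/
/-!
Pair a polynomial `f` of degree `< gw` with the rows of the Chen–Skriganov matrices: row
`l * w + i` of `C_j` sends the coefficient vector of `f` to the value at `β_{j,l}` of the `i`-th
Hasse derivative of `f`. So an element `k` of the dual net is a linear relation between Hermite
interpolation functionals at the distinct nodes `β_{j,l}`, with the digits of `k` as coefficients.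
If the functionals in use have orders `< m_{j,l}` at the node `β_{j,l}` and `∑ m_{j,l} ≤ gw`, they
are linearly independent (`hermite_independent`), hence `k = 0` (`dual_eq_zero`).

Both bounds come from a choice of `m`. If `k` has at most `g` nonzero digits, at most `g` nodes are
involved and `m = w` at these nodes is admissible. If `μ_1(k) ≤ gw`, then
`m_{j,l} = min (w, μ_1(k_j) - l * w)` is admissible, because its sum over `l` is at most `μ_1(k_j)`.
-/

open scoped BigOperators

/-- The `i`-th digit (starting from `i = 0`) of the `b`-adic expansion of `k`. -/
def bdigit (b k i : ℕ) : ℕ := k / b ^ i % b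

/-- The set of indices of nonzero `b`-adic digits of `k`. -/
def bsupp (b k : ℕ) : Finset ℕ := (Finset.range (k + 1)).filter fun i => bdigit b k i ≠ 0

/-- The Hamming metric `κ(k)`: the number of nonzero `b`-adic digits of `k`. -/
def hamming (b k : ℕ) : ℕ := (bsupp b k).card

/-- The Dick metric `μ_α(k)`: the sum of the `min(v, α)` largest exponents-plus-one
`a_1 > a_2 > ⋯` of the nonzero `b`-adic digits of `k`. -/
def dick (b α k : ℕ) : ℕ := ((((bsupp b k).sort (· ≤ ·)).reverse.take α).map (· + 1)).sum

/-- Digitwise addition `k ⊕ l` modulo `b` of the `b`-adic digits. -/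
def dadd (b k l : ℕ) : ℕ :=
  ∑ i ∈ Finset.range (k + l + 1), (bdigit b k i + bdigit b l i) % b * b ^ i

/-- Digitwise subtraction `k ⊖ l` modulo `b` of the `b`-adic digits. -/
def dsub (b k l : ℕ) : ℕ :=
  ∑ i ∈ Finset.range (k + l + 1), (bdigit b k i + (b - bdigit b l i)) % b * b ^ i

/-- Hamming metric of a vector: sum over coordinates. -/
def hammingVec (b : ℕ) {s : ℕ} (k : Fin s → ℕ) : ℕ := ∑ j, hamming b (k j)

/-- Dick metric of a vector: sum over coordinates. -/
def dickVec (b α : ℕ) {s : ℕ} (k : Fin s → ℕ) : ℕ := ∑ j, dick b α (k j)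

/-- The column vector of the first `n` `b`-adic digits of `k`, as a vector over `F_b = ZMod b`. -/
def trv (b n : ℕ) (k : ℕ) : Fin n → ZMod b := fun i => (bdigit b k i.1 : ZMod b)

/-- The dual net `P⊥` of the digital net with generating matrices `C`. -/
def dualNet (b : ℕ) {s n m : ℕ} (C : Fin s → Matrix (Fin n) (Fin m) (ZMod b)) :
    Set (Fin s → ℕ) :=
  {k | (∀ j, k j < b ^ n) ∧ ∑ j, ((C j).transpose).mulVec (trv b n (k j)) = 0}

/-- The dual net `P∞⊥` of the digital net with generating matrices `C` (no upper bound
on the components of `k`). -/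
def dualNetInf (b : ℕ) {s n m : ℕ} (C : Fin s → Matrix (Fin n) (Fin m) (ZMod b)) :
    Set (Fin s → ℕ) :=
  {k | ∑ j, ((C j).transpose).mulVec (trv b n (k j)) = 0}

/-- The `h`-th point of the digital net generated by the matrices `C` over `ZMod b`:
its `j`-th coordinate is `∑_{i=1}^n ξ_i b^{-i}` with `(ξ_1,…,ξ_n)ᵀ = C_j · (η_0,…,η_{m-1})ᵀ`,
where `η` are the `b`-adic digits of `h`. -/
noncomputable def netPoint (b : ℕ) {s n m : ℕ} (C : Fin s → Matrix (Fin n) (Fin m) (ZMod b))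
    (h : ℕ) : Fin s → ℝ :=
  fun j => ∑ i : Fin n,
    (((C j).mulVec (fun v : Fin m => (bdigit b h v.1 : ZMod b)) i).val : ℝ) / (b : ℝ) ^ (i.1 + 1)

/-- Sum of the `α` largest elements of a finite set of (0-based) row indices, counted
1-based, i.e. each index `i` contributes `i + 1`. -/
def topSum (α : ℕ) (R : Finset ℕ) : ℕ := (((R.sort (· ≤ ·)).reverse.take α).map (· + 1)).sum

/-- The digital net with generating matrices `C_1,…,C_s ∈ F_b^{n×m}` is an order `α`
digital `(t,m,s)`-net: for every choice of rows `i_{j,v_j} < ⋯ < i_{j,1}` from each `C_j`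
such that the 1-based indices of the `min(α, v_j)` largest chosen rows of each matrix sum
to at most `αm - t`, the chosen rows are linearly independent over `F_b`. -/
def isOrderNet (b α t m : ℕ) {s n : ℕ} (C : Fin s → Matrix (Fin n) (Fin m) (ZMod b)) : Prop :=
  ∀ R : Fin s → Finset (Fin n),
    (∑ j, topSum α ((R j).image Fin.val)) ≤ α * m - t →
    LinearIndependent (ZMod b) fun p : Σ j : Fin s, {i : Fin n // i ∈ R j} => C p.1 p.2.1

/-- The minimum Dick metric `μ_α(P)` of the digital net with generating matrices `C`,
namely the minimum of `μ_α(k)` over nonzero elements `k` of the dual net. -/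
noncomputable def minDick (b α : ℕ) {s n m : ℕ}
    (C : Fin s → Matrix (Fin n) (Fin m) (ZMod b)) : ℕ :=
  sInf (dickVec b α '' {k | k ∈ dualNet b C ∧ k ≠ 0})

/-- The minimum Hamming metric `κ(P)` of the digital net with generating matrices `C`. -/
noncomputable def minHamming (b : ℕ) {s n m : ℕ}
    (C : Fin s → Matrix (Fin n) (Fin m) (ZMod b)) : ℕ :=
  sInf (hammingVec b '' {k | k ∈ dualNet b C ∧ k ≠ 0})

/-- The Chen–Skriganov generating matrix (for one coordinate `j`, with row parameters
`βr l = β_{j,l}`): the entry in (1-based) row `u = (l-1)w + i` and column `v` is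
`binom(v-1, i-1) · β_{j,l}^{v-i}` (which vanishes when `v < i` since the binomial
coefficient is `0`). Indices here are 0-based. -/
def csMatrix (b w n : ℕ) (βr : ℕ → ZMod b) : Matrix (Fin n) (Fin n) (ZMod b) :=
  Matrix.of fun u v =>
    (Nat.choose v.1 (u.1 % w) : ZMod b) * βr (u.1 / w) ^ (v.1 - u.1 % w)

open Polynomial in
lemma hasseDeriv_eval_eq_zero {F : Type*} [Field F] {r : F} {n i : ℕ} {f : F[X]}
    (h : (X - C r) ^ n ∣ f) (hi : i < n) : (hasseDeriv i f).eval r = 0 := by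
  rw [← taylor_coeff]
  obtain ⟨q, rfl⟩ := h
  have : taylor r ((X - C r) ^ n * q) = X ^ n * taylor r q := by
    simp [taylor_mul, taylor_pow]
  rw [this, coeff_X_pow_mul', if_neg (by omega)]

open Polynomial in
lemma hasseDeriv_eval_top {F : Type*} [Field F] (r : F) (n : ℕ) (q : F[X]) :
    (hasseDeriv n ((X - C r) ^ n * q)).eval r = q.eval r := by
  rw [← taylor_coeff]
  have : taylor r ((X - C r) ^ n * q) = X ^ n * taylor r q := by
    simp [taylor_mul, taylor_pow]
  rw [this, coeff_X_pow_mul', if_pos le_rfl, Nat.sub_self, taylor_coeff_zero]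

open Polynomial in
lemma hasseDeriv_eval_eq_sum {F : Type*} [Field F] (r : F) (i N : ℕ) (f : F[X])
    (hf : f.natDegree < N) : (hasseDeriv i f).eval r =
      ∑ v ∈ Finset.range N, f.coeff v * ((v.choose i : F) * r ^ (v - i)) := by
  rw [hasseDeriv_apply, sum_over_range' _ (by simp) N hf, eval_finsetSum]
  refine Finset.sum_congr rfl fun v _ => ?_
  rw [eval_monomial]
  ring

open Polynomial in
/-- Linear independence of the Hermite functionals `f ↦ (hasseDeriv i f)(β p)`, `i < m p`, on
polynomials of degree `< N`, when `∑ m p ≤ N`. The test polynomial isolating the highest-order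
coefficient `c p i ≠ 0` at a node `p` is `(X - β p) ^ i * ∏_{q ≠ p} (X - β q) ^ m q`. -/
lemma hermite_independent {F ι : Type*} [Field F] [Fintype ι] [DecidableEq ι] (β : ι → F)
    (hβ : Function.Injective β) (N w : ℕ) (c : ι → ℕ → F) (m : ι → ℕ)
    (hw : ∀ p i, w ≤ i → c p i = 0) (hm : ∀ p i, m p ≤ i → c p i = 0) (hN : ∑ p, m p ≤ N)
    (H : ∀ v < N, ∑ p, ∑ i ∈ Finset.range w, c p i * ((v.choose i : F) * β p ^ (v - i)) = 0) :
    ∀ p i, c p i = 0 := by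
  classical
  by_contra! hne
  obtain ⟨p, hp⟩ := hne
  obtain ⟨i, hi, hmax⟩ : ∃ i, c p i ≠ 0 ∧ ∀ i', i < i' → c p i' = 0 := by
    obtain ⟨i₀, hi₀⟩ := hp
    have hle : i₀ ≤ w := by
      by_contra hlt
      exact hi₀ (hw p i₀ (by omega))
    refine ⟨Nat.findGreatest (fun i => c p i ≠ 0) w,
      Nat.findGreatest_spec (P := fun i => c p i ≠ 0) hle hi₀, fun i' hi' => ?_⟩
    by_cases h : i' ≤ w
    · exact not_not.1 (Nat.findGreatest_is_greatest hi' h)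
    · exact hw p i' (by omega)
  have him : i < m p := by
    by_contra hlt
    exact hi (hm p i (by omega))
  have hiw : i < w := by
    by_contra hlt
    exact hi (hw p i (by omega))
  set Q : F[X] := ∏ q ∈ Finset.univ.erase p, (X - C (β q)) ^ m q with hQ
  set f : F[X] := (X - C (β p)) ^ i * Q with hf
  have hdeg : f.natDegree < N := by
    have h1 : Q.natDegree = ∑ q ∈ Finset.univ.erase p, m q := by
      rw [hQ, natDegree_prod_of_monic _ _ fun q _ => (monic_X_sub_C _).pow _]
      simp
    have h2 : f.natDegree ≤ i + Q.natDegree := by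
      refine natDegree_mul_le.trans ?_
      simp
    have h3 := Finset.add_sum_erase Finset.univ m (Finset.mem_univ p)
    omega
  have hzero : ∑ q, ∑ i' ∈ Finset.range w, c q i' * (hasseDeriv i' f).eval (β q) = 0 := by
    calc ∑ q, ∑ i' ∈ Finset.range w, c q i' * (hasseDeriv i' f).eval (β q)
        = ∑ q, ∑ i' ∈ Finset.range w, ∑ v ∈ Finset.range N,
            f.coeff v * (c q i' * ((v.choose i' : F) * β q ^ (v - i'))) := by
          refine Finset.sum_congr rfl fun q _ => Finset.sum_congr rfl fun i' _ => ?_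
          rw [hasseDeriv_eval_eq_sum _ _ N f hdeg, Finset.mul_sum]
          exact Finset.sum_congr rfl fun v _ => by ring
      _ = ∑ v ∈ Finset.range N, f.coeff v *
            ∑ q, ∑ i' ∈ Finset.range w, c q i' * ((v.choose i' : F) * β q ^ (v - i')) := by
          simp_rw [Finset.mul_sum]
          rw [Finset.sum_comm]
          rw [Finset.sum_congr rfl fun i' _ => Finset.sum_comm, Finset.sum_comm]
          exact Finset.sum_congr rfl fun v _ => Finset.sum_comm
      _ = 0 := Finset.sum_eq_zero fun v hv => by
          rw [H v (Finset.mem_range.1 hv), mul_zero]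
  rw [Finset.sum_eq_single p, Finset.sum_eq_single i] at hzero
  · rw [hf, hasseDeriv_eval_top, mul_eq_zero, hQ, eval_prod] at hzero
    rcases hzero with h | h
    · exact hi h
    · obtain ⟨q, hq, h0⟩ := Finset.prod_eq_zero_iff.1 h
      rw [eval_pow] at h0
      have h1 := eq_zero_of_pow_eq_zero h0
      simp [sub_eq_zero] at h1
      exact (Finset.ne_of_mem_erase hq) (hβ h1.symm)
  · intro i' _ hne
    rcases lt_or_gt_of_ne hne with h | h
    · rw [hasseDeriv_eval_eq_zero (Dvd.intro _ rfl) h, mul_zero]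
    · rw [hmax i' h, zero_mul]
  · intro h
    exact absurd (Finset.mem_range.2 hiw) h
  · intro q _ hq
    refine Finset.sum_eq_zero fun i' _ => ?_
    by_cases h : i' < m q
    · have hdvd : (X - C (β q)) ^ m q ∣ f :=
        (Finset.dvd_prod_of_mem (fun q => (X - C (β q)) ^ m q)
          (Finset.mem_erase.2 ⟨hq, Finset.mem_univ q⟩)).mul_left _
      rw [hasseDeriv_eval_eq_zero hdvd h, mul_zero]
    · rw [hm q i' (by omega), zero_mul]
  · intro h
    exact absurd (Finset.mem_univ p) h

lemma exists_bdigit_ne_zero {b k n : ℕ} (hb : 1 < b) (hk : k ≠ 0) (hn : k < b ^ n) :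
    ∃ u < n, bdigit b k u ≠ 0 := by
  refine ⟨Nat.log b k, Nat.log_lt_of_lt_pow hk hn, ?_⟩
  have h1 : k / b ^ Nat.log b k < b := by
    rw [Nat.div_lt_iff_lt_mul (by positivity), mul_comm, ← pow_succ]
    exact Nat.lt_pow_succ_log_self hb k
  have h2 : 0 < k / b ^ Nat.log b k :=
    Nat.div_pos (Nat.pow_log_le_self b hk) (by positivity)
  rw [bdigit, Nat.mod_eq_of_lt h1]
  omega

lemma mem_bsupp {b k u : ℕ} (hb : 1 < b) (h : bdigit b k u ≠ 0) : u ∈ bsupp b k := by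
  refine Finset.mem_filter.2 ⟨Finset.mem_range.2 ?_, h⟩
  by_contra hlt
  have : k < b ^ u := lt_of_lt_of_le (by omega) (Nat.lt_pow_self hb).le
  exact h (by simp [bdigit, Nat.div_eq_of_lt this])

lemma succ_le_dick_one {b k u : ℕ} (h : u ∈ bsupp b k) : u + 1 ≤ dick b 1 k := by
  have hs : ((bsupp b k).sort (· ≤ ·)).reverse.Pairwise (· ≥ ·) := by
    rw [List.pairwise_reverse]
    exact (Finset.pairwise_sort _ _)
  have hu : u ∈ ((bsupp b k).sort (· ≤ ·)).reverse := by simpa using h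
  unfold dick
  generalize ((bsupp b k).sort (· ≤ ·)).reverse = L at hs hu
  cases L with
  | nil => simp at hu
  | cons a t =>
    have : u ≤ a := by
      rcases List.mem_cons.1 hu with rfl | hu
      · exact le_rfl
      · exact (List.pairwise_cons.1 hs).1 u hu
    simpa using this

lemma sum_min_sub_le (w d g : ℕ) : ∑ l ∈ Finset.range g, min w (d - l * w) ≤ d := by
  have : ∑ l ∈ Finset.range g, min w (d - l * w) = min (g * w) d := by
    induction g with
    | zero => simp
    | succ g ih =>
      rw [Finset.sum_range_succ, ih, Nat.succ_mul]
      omega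
  omega

/-- An element of the Chen–Skriganov dual net vanishes as soon as its digits at the positions
`l * w + i` with `m j l ≤ i < w` vanish, for multiplicities `m` of total at most `g * w`. -/
lemma dual_eq_zero (b s g w : ℕ) (hb : b.Prime) (hw : 0 < w) (βe : ℕ → ℕ → ZMod b)
    (hdist : ∀ j l j' l', j < s → l < g → j' < s → l' < g →
      βe j l = βe j' l' → j = j' ∧ l = l')
    (k : Fin s → ℕ) (hk : k ∈ dualNet b (fun j : Fin s => csMatrix b w (g * w) (βe j.1)))
    (m : Fin s → ℕ → ℕ) (hm : ∀ j, ∀ l < g, ∀ i < w, bdigit b (k j) (l * w + i) ≠ 0 → i < m j l)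
    (hsum : ∑ j, ∑ l ∈ Finset.range g, m j l ≤ g * w) : k = 0 := by
  have : Fact b.Prime := ⟨hb⟩
  obtain ⟨hlt, hk⟩ := hk
  have key := hermite_independent (F := ZMod b) (ι := Fin s × Fin g)
    (fun p => βe p.1 p.2) (fun p q h => by
      obtain ⟨h1, h2⟩ := hdist _ _ _ _ p.1.2 p.2.2 q.1.2 q.2.2 h
      exact Prod.ext (Fin.ext h1) (Fin.ext h2)) (g * w) w
    (fun p i => if i < w then (bdigit b (k p.1) (p.2 * w + i) : ZMod b) else 0)
    (fun p => m p.1 p.2) (fun p i hi => if_neg (by omega))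
    (fun p i hi => by
      by_cases h : i < w
      · rw [if_pos h]
        by_contra hne
        have := hm p.1 p.2 p.2.2 i h (fun h0 => hne (by rw [h0, Nat.cast_zero]))
        omega
      · exact if_neg h)
    (by
      rw [Fintype.sum_prod_type]
      simpa [Finset.sum_range] using hsum)
    (fun v hv => by
      have hv' := congrFun hk ⟨v, hv⟩
      rw [Finset.sum_apply, Pi.zero_apply] at hv'
      rw [← hv', Fintype.sum_prod_type]
      refine Finset.sum_congr rfl fun j _ => ?_
      rw [Matrix.mulVec, dotProduct, ← finProdFinEquiv.sum_comp, Fintype.sum_prod_type]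
      refine Finset.sum_congr rfl fun l _ => ?_
      rw [Finset.sum_range]
      refine Finset.sum_congr rfl fun i _ => ?_
      have h1 : (i.1 + w * l.1) % w = i.1 := by
        rw [Nat.add_mul_mod_self_left, Nat.mod_eq_of_lt i.2]
      have h2 : (i.1 + w * l.1) / w = l.1 := by
        rw [Nat.add_mul_div_left _ _ hw, Nat.div_eq_of_lt i.2, zero_add]
      have h3 : l.1 * w + i.1 = i.1 + w * l.1 := by ring
      simp only [Matrix.transpose_apply, csMatrix, Matrix.of_apply, trv, finProdFinEquiv_apply_val,
        h1, h2, h3, if_pos i.2]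
      ring)
  funext j
  by_contra hne
  obtain ⟨u, hu, hd⟩ := exists_bdigit_ne_zero hb.one_lt hne (hlt j)
  have hul : u / w < g := Nat.div_lt_of_lt_mul (by rwa [mul_comm])
  have h0 := key (j, ⟨u / w, hul⟩) (u % w)
  simp only [Nat.mod_lt u hw, if_true, Nat.div_add_mod'] at h0
  rw [ZMod.natCast_eq_zero_iff] at h0
  exact hd (Nat.eq_zero_of_dvd_of_lt h0 (Nat.mod_lt _ hb.pos))

/-- Chen–Skriganov. For `s, g, w ∈ ℕ` and a prime `b ≥ gs`, the
Chen–Skriganov digital net `P` over `F_b` with `b^{gw}` points in `[0,1)^s` satisfies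
`κ(P) ≥ g + 1` and `μ_1(P) ≥ gw + 1`. -/
theorem chen_skriganov_metrics
    (b s g w : ℕ) (hb : b.Prime) (hs : 0 < s) (hg : 0 < g) (hw : 0 < w)
    (hbs : g * s ≤ b) (βe : ℕ → ℕ → ZMod b)
    (hdist : ∀ j l j' l', j < s → l < g → j' < s → l' < g →
      βe j l = βe j' l' → j = j' ∧ l = l') :
    ∀ k ∈ dualNet b (fun j : Fin s => csMatrix b w (g * w) (βe j.1)), k ≠ 0 →
      g + 1 ≤ hammingVec b k ∧ g * w + 1 ≤ dickVec b 1 k := by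
  intro k hk hne
  constructor
  · by_contra hlt
    have hH : hammingVec b k ≤ g := by omega
    refine hne (dual_eq_zero b s g w hb hw βe hdist k hk
      (fun j l => if l ∈ (bsupp b (k j)).image (· / w) then w else 0) ?_ ?_)
    · intro j l _ i hi hd
      have hmem : l ∈ (bsupp b (k j)).image (· / w) := by
        refine Finset.mem_image.2 ⟨l * w + i, mem_bsupp hb.one_lt hd, ?_⟩
        rw [mul_comm, Nat.mul_add_div hw, Nat.div_eq_of_lt hi, add_zero]
      simpa only [if_pos hmem] using hi
    · refine le_trans ?_ (Nat.mul_le_mul_right w hH)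
      rw [hammingVec, Finset.sum_mul]
      refine Finset.sum_le_sum fun j _ => ?_
      rw [← Finset.sum_filter, Finset.sum_const, smul_eq_mul]
      refine Nat.mul_le_mul_right w ((Finset.card_le_card ?_).trans
        (Finset.card_image_le (f := (· / w))))
      exact fun l hl => (Finset.mem_filter.1 hl).2
  · by_contra hlt
    have hD : dickVec b 1 k ≤ g * w := by omega
    refine hne (dual_eq_zero b s g w hb hw βe hdist k hk
      (fun j l => min w (dick b 1 (k j) - l * w)) ?_ ?_)
    · intro j l _ i hi hd
      have := succ_le_dick_one (mem_bsupp hb.one_lt hd)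
      show i < min w (dick b 1 (k j) - l * w)
      omega
    · exact le_trans (Finset.sum_le_sum fun j _ => sum_min_sub_le w _ g) hD
end

section
/- Let b be a prime and let 1 ≤ α' < α and 0 ≤ t ≤ αm. Any order α digital (t, m, s)-net over F_b is also an order α' digital (t', m, s)-net over F_b with t' = ⌈t α'/α⌉. -/
/-!
Let `μ_α` (`topSum α`) be the sum of the `α` largest 1-based row indices.
It satisfies `α' μ_α ≤ α μ_{α'}` for `α' ≤ α`, because the
average of the `k` largest entries (padded with zeros) is nonincreasing in `k`
(`mul_sum_take_le`, `mul_topSum_le`). So a choice of rows with `∑ μ_{α'} ≤ α' m - t'`, where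
`α t' ≥ α' t`, satisfies `α' ∑ μ_α ≤ α (α' m - t') ≤ α' (α m - t)`, and the order `α` condition
applies to the same rows.
-/

open scoped BigOperators

/-- In a weakly decreasing list the average of the first `k` entries (padding with zeros)
decreases in `k`: the entry `x` following the first `k'` ones, if there is one, bounds
those from below and the later ones from above. -/
lemma mul_sum_take_le (l : List ℕ) (hl : l.Pairwise (· ≥ ·)) {k' k : ℕ} (hk : k' ≤ k) :
    k' * (l.take k).sum ≤ k * (l.take k').sum := by
  obtain ⟨d, rfl⟩ := Nat.exists_eq_add_of_le hk
  rw [List.take_add, List.sum_append]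
  suffices hD : k' * ((l.drop k').take d).sum ≤ d * (l.take k').sum by linarith
  have hpair : (l.take k' ++ l.drop k').Pairwise (· ≥ ·) := by
    rwa [List.take_append_drop]
  obtain ⟨-, hdrop, hcross⟩ := List.pairwise_append.1 hpair
  rcases hx : l.drop k' with _ | ⟨x, r⟩
  · simp
  · rw [hx] at hdrop hcross
    have hlen : (l.take k').length = k' := by
      have : (l.drop k').length = r.length + 1 := by rw [hx]; rfl
      rw [List.length_drop] at this
      rw [List.length_take]
      omega
    have hlow : k' * x ≤ (l.take k').sum := by
      have := List.card_nsmul_le_sum (l.take k') x fun a ha => hcross a ha x (by simp)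
      rwa [hlen, smul_eq_mul] at this
    have hup : ((x :: r).take d).sum ≤ d * x := by
      have h1 := List.sum_le_card_nsmul ((x :: r).take d) x fun a ha => by
        rcases List.mem_cons.1 (List.mem_of_mem_take ha) with rfl | har
        · exact le_rfl
        · exact (List.pairwise_cons.1 hdrop).1 a har
      rw [smul_eq_mul] at h1
      exact h1.trans (Nat.mul_le_mul_right _ (List.length_take_le _ _))
    calc k' * ((x :: r).take d).sum ≤ k' * (d * x) := Nat.mul_le_mul_left _ hup
      _ = d * (k' * x) := by ring
      _ ≤ d * (l.take k').sum := Nat.mul_le_mul_left _ hlow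

lemma mul_topSum_le (R : Finset ℕ) {α' α : ℕ} (h : α' ≤ α) :
    α' * topSum α R ≤ α * topSum α' R := by
  unfold topSum
  rw [List.map_take, List.map_take]
  refine mul_sum_take_le _ ?_ h
  rw [List.pairwise_map, List.pairwise_reverse]
  exact (R.pairwise_sort (· ≤ ·)).imp fun hab => Nat.succ_le_succ hab

/-- propagation property. For `1 ≤ α' < α` and `0 ≤ t ≤ αm`, any order
`α` digital `(t,m,s)`-net over `F_b` is also an order `α'` digital `(t',m,s)`-net over
`F_b` with `t' = ⌈t α'/α⌉`. -/
theorem propagation_rule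
    (b s n m α α' t : ℕ) (hb : b.Prime) (hα' : 1 ≤ α') (hαα : α' < α)
    (ht : t ≤ α * m) (hn : α * m ≤ n)
    (C : Fin s → Matrix (Fin n) (Fin m) (ZMod b))
    (h : isOrderNet b α t m C) :
    isOrderNet b α' (Nat.ceil ((t * α' : ℚ) / (α : ℚ))) m C := by
  intro R hR
  apply h R
  refine Nat.le_of_mul_le_mul_left ?_ hα'
  set t' := Nat.ceil ((t * α' : ℚ) / (α : ℚ)) with ht'
  have hceil : α' * t ≤ α * t' := by
    have hαpos : (0 : ℚ) < α := by exact_mod_cast (by omega : 0 < α)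
    have h1 : (t * α' : ℚ) / (α : ℚ) ≤ t' := Nat.le_ceil _
    rw [div_le_iff₀ hαpos] at h1
    have h2 : t * α' ≤ t' * α := by exact_mod_cast h1
    linarith
  calc α' * ∑ j, topSum α ((R j).image Fin.val)
      ≤ α * ∑ j, topSum α' ((R j).image Fin.val) := by
        rw [Finset.mul_sum, Finset.mul_sum]
        exact Finset.sum_le_sum fun j _ => mul_topSum_le _ hαα.le
    _ ≤ α * (α' * m - t') := Nat.mul_le_mul_left _ hR
    _ = α' * (α * m) - α * t' := by rw [Nat.mul_sub]; congr 1; ring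
    _ ≤ α' * (α * m) - α' * t := Nat.sub_le_sub_left hceil _
    _ = α' * (α * m - t) := by rw [Nat.mul_sub]
end

section
/- Let b be a prime, s, β, m ∈ ℕ, and let Q ⊂ [0,1)^{βs} be a digital net over F_b with generating matrices C_1,...,C_{βs} ∈ F_b^{m×m}. Let P ⊂ [0,1)^s be the digital net obtained from Q by digit interlacing composition with factor β, and extend E_β to ℕ₀^{βs} → ℕ₀^s by applying E_β to each consecutive block of β components. Then P⊥ = {E_β(k) : k ∈ Q⊥}, and consequently κ(P) = κ(Q). -/
/-!
A natural number is determined by its `b`-adic digits (`eq_of_bdigit_eq`), and the interlacing map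
only rearranges digits: digit `r` of `E_β(k)` is digit `r / β` of `k_{r % β}` (`bdigit_Enat`). Row
`r` of an interlaced matrix is chosen by the same rule, so after reindexing `r = β a + i`
(`sum_fin_mul`) the linear equation defining `P⊥` at `E_β(k)` is the one defining `Q⊥` at `k`, and
the size constraints `E_β(k) < b^{βm}` and `k < b^m` also agree (`Evec_mem_dualNet_iff`). Since
`E_β` is onto (`exists_Evec_eq`), this gives `P⊥ = E_β(Q⊥)`. Rearranging digits preserves the number
of nonzero ones and the property of being nonzero, so the two minima are over the same set of values.
-/

open scoped BigOperators

/-- Dick's digit interlacing composition with interlacing factor `α` applied to the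
generating matrices `C_1,…,C_{αs} ∈ F_b^{m×m}`: the resulting matrices
`D_1,…,D_s ∈ F_b^{αm×m}` are such that the (1-based) `(α(h-1)+i)`-th row of `D_j` is the
`h`-th row of `C_{α(j-1)+i}`. -/
def interlace {R : Type*} (α s m : ℕ) (C : Fin (α * s) → Matrix (Fin m) (Fin m) R) :
    Fin s → Matrix (Fin (α * m)) (Fin m) R :=
  fun j => Matrix.of fun r v =>
    C ⟨α * j.1 + r.1 % α, by
        have hα : 0 < α := by
          rcases Nat.eq_zero_or_pos α with h | h
          · exact absurd r.2 (by simp [h])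
          · exact h
        have h1 : α * (j.1 + 1) ≤ α * s := Nat.mul_le_mul_left α j.2
        have h2 : α * (j.1 + 1) = α * j.1 + α := by ring
        have h3 : r.1 % α < α := Nat.mod_lt _ hα
        omega⟩
      ⟨r.1 / α, by
        have hα : 0 < α := by
          rcases Nat.eq_zero_or_pos α with h | h
          · exact absurd r.2 (by simp [h])
          · exact h
        exact Nat.div_lt_of_lt_mul r.2⟩
      v

/-- The digit interlacing map `E_β : ℕ^β → ℕ`,
`E_β(k_1,…,k_β) = ∑_{a≥0} ∑_{j=1}^β κ_{a,j} b^{aβ+j-1}` where `κ_{a,j}` is the `a`-th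
`b`-adic digit of `k_j`. -/
def Enat (b β : ℕ) (k : Fin β → ℕ) : ℕ :=
  ∑ j : Fin β, ∑ a ∈ Finset.range (k j + 1), bdigit b (k j) a * b ^ (a * β + j.1)

/-- The digit interlacing map extended to vectors, `E_β : ℕ^{βs} → ℕ^s`, applying `E_β`
to each consecutive block of `β` components. -/
def Evec (b β s : ℕ) (k : Fin (β * s) → ℕ) : Fin s → ℕ :=
  fun j => Enat b β fun i =>
    k ⟨β * j.1 + i.1, by
      have h1 : β * (j.1 + 1) ≤ β * s := Nat.mul_le_mul_left β j.2
      have h2 : β * (j.1 + 1) = β * j.1 + β := by ring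
      have h3 := i.2
      omega⟩

/-! ### Digits of natural numbers -/

lemma bdigit_zero_left (b i : ℕ) : bdigit b 0 i = 0 := by simp [bdigit]

lemma bdigit_succ (b k i : ℕ) : bdigit b k (i + 1) = bdigit b (k / b) i := by
  simp [bdigit, pow_succ', Nat.div_div_eq_div_mul]

lemma bdigit_lt {b : ℕ} (hb : 1 < b) (k i : ℕ) : bdigit b k i < b :=
  Nat.mod_lt _ (by omega)

lemma bdigit_eq_zero_of_lt {b k n i : ℕ} (hb : 1 < b) (h : k < b ^ n) (hi : n ≤ i) :
    bdigit b k i = 0 := by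
  have : k < b ^ i := h.trans_le (Nat.pow_le_pow_right (by omega) hi)
  simp [bdigit, Nat.div_eq_of_lt this]

lemma eq_of_bdigit_eq {b : ℕ} (hb : 1 < b) :
    ∀ k l : ℕ, (∀ i, bdigit b k i = bdigit b l i) → k = l := by
  intro k
  induction k using Nat.strong_induction_on with
  | _ k ih =>
    intro l h
    have h0 : k % b = l % b := by simpa [bdigit] using h 0
    have hdiv : k / b = l / b := by
      rcases Nat.eq_zero_or_pos k with rfl | hk
      · -- strong induction gives nothing at `k = 0`; all digits of `l` vanish, so use `l` instead
        have key : ∀ l : ℕ, (∀ i, bdigit b l i = 0) → l = 0 := by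
          intro l
          induction l using Nat.strong_induction_on with
          | _ l ihl =>
            intro hl
            by_contra hne
            have h1 := ihl (l / b) (Nat.div_lt_self (by omega) hb)
              (fun i => by rw [← bdigit_succ]; exact hl _)
            have h2 : l % b = 0 := by simpa [bdigit] using hl 0
            have h3 := Nat.mod_add_div l b
            rw [h1, h2] at h3
            omega
        have : l = 0 := key l fun i => by rw [← h i, bdigit_zero_left]
        rw [this]
      · exact ih (k / b) (Nat.div_lt_self hk hb) _ fun i => by
          rw [← bdigit_succ, ← bdigit_succ]; exact h _
    rw [← Nat.mod_add_div k b, ← Nat.mod_add_div l b, h0, hdiv]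

lemma lt_pow_iff_bdigit {b : ℕ} (hb : 1 < b) (k n : ℕ) :
    k < b ^ n ↔ ∀ i, n ≤ i → bdigit b k i = 0 := by
  refine ⟨fun h i hi => bdigit_eq_zero_of_lt hb h hi, fun h => ?_⟩
  have h0 : k / b ^ n = 0 := eq_of_bdigit_eq hb _ _ fun i => by
    rw [bdigit_zero_left, ← h (n + i) (by omega)]
    simp [bdigit, Nat.div_div_eq_div_mul, pow_add]
  exact (Nat.div_eq_zero_iff_lt (by positivity)).1 h0

lemma bdigit_sum {b : ℕ} (hb : 1 < b) (N : ℕ) (d : ℕ → ℕ) (hd : ∀ i, d i < b) (r : ℕ) :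
    bdigit b (∑ i ∈ Finset.range N, d i * b ^ i) r = if r < N then d r else 0 := by
  induction N generalizing d r with
  | zero => simp [bdigit_zero_left]
  | succ N ih =>
    have hsum : ∑ i ∈ Finset.range (N + 1), d i * b ^ i
        = d 0 + b * ∑ i ∈ Finset.range N, d (i + 1) * b ^ i := by
      rw [Finset.sum_range_succ', Finset.mul_sum, add_comm]
      congr 1
      · simp
      · exact Finset.sum_congr rfl fun i _ => by ring
    rw [hsum]
    cases r with
    | zero => simp [bdigit, Nat.mod_eq_of_lt (hd 0)]
    | succ r =>
      rw [bdigit_succ, Nat.add_mul_div_left _ _ (by omega), Nat.div_eq_of_lt (hd 0), zero_add,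
        ih (fun i => d (i + 1)) (fun i => hd _)]
      simp

/-- The Hamming weight may be computed by counting nonzero digits among any `N` positions that
include all of them. -/
lemma hamming_eq_sum {b k N : ℕ} (hb : 1 < b) (hk : k < b ^ N) :
    hamming b k = ∑ i : Fin N, if bdigit b k i ≠ 0 then 1 else 0 := by
  rw [← Finset.sum_range (fun i => if bdigit b k i ≠ 0 then 1 else 0), ← Finset.card_filter,
    hamming, bsupp]
  congr 1
  ext i
  simp only [Finset.mem_filter, Finset.mem_range, and_congr_left_iff]
  intro hi
  have h1 : i < k + 1 := by
    by_contra hcon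
    exact hi (bdigit_eq_zero_of_lt hb (Nat.lt_pow_self hb) (by omega))
  have h2 : i < N := by
    by_contra hcon
    exact hi (bdigit_eq_zero_of_lt hb hk (by omega))
  exact iff_of_true h1 h2

/-! ### Digits of the interlacing map -/

lemma block_lt {β s : ℕ} (j : Fin s) (i : Fin β) : β * j.1 + i.1 < β * s := by
  have h1 : β * (j.1 + 1) ≤ β * s := Nat.mul_le_mul_left β j.2
  have h2 : β * (j.1 + 1) = β * j.1 + β := by ring
  have h3 := i.2
  omega

lemma sum_fin_mul {M : Type*} [AddCommMonoid M] (β s : ℕ) (f : Fin (β * s) → M) :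
    ∑ x, f x = ∑ j : Fin s, ∑ i : Fin β, f ⟨β * j.1 + i.1, block_lt j i⟩ := by
  rw [← Fintype.sum_prod_type']
  refine (Fintype.sum_equiv (finProdFinEquiv.trans (finCongr (mul_comm s β))) _ _ ?_).symm
  intro x
  congr 1
  ext
  simp [add_comm]

lemma block_mod {β : ℕ} (a : ℕ) (i : Fin β) : (β * a + i.1) % β = i.1 := by
  rw [Nat.mul_add_mod, Nat.mod_eq_of_lt i.2]

lemma block_div {β : ℕ} (a : ℕ) (i : Fin β) : (β * a + i.1) / β = a := by
  have := i.2
  rw [Nat.mul_add_div (by omega), Nat.div_eq_of_lt i.2, add_zero]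

lemma bdigit_Enat {b β : ℕ} (hb : 1 < b) (hβ : 0 < β) (k : Fin β → ℕ) (r : ℕ) :
    bdigit b (Enat b β k) r = bdigit b (k ⟨r % β, Nat.mod_lt _ hβ⟩) (r / β) := by
  -- a common bound for the number of digits of all components
  set N := ∑ j, (k j + 1) with hN
  have hkN : ∀ j, k j + 1 ≤ N := fun j =>
    Finset.single_le_sum (f := fun j => k j + 1) (fun _ _ => Nat.zero_le _) (Finset.mem_univ j)
  have hE : Enat b β k = ∑ r ∈ Finset.range (β * N),
      bdigit b (k ⟨r % β, Nat.mod_lt _ hβ⟩) (r / β) * b ^ r := by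
    rw [Finset.sum_range, sum_fin_mul, Finset.sum_comm, Enat]
    refine Finset.sum_congr rfl fun j _ => ?_
    simp only [block_mod, block_div]
    rw [← Finset.sum_range (fun a => bdigit b (k j) a * b ^ (β * a + j.1))]
    simp only [mul_comm β]
    refine Finset.sum_subset (Finset.range_mono (hkN j)) fun a _ ha => ?_
    rw [bdigit_eq_zero_of_lt hb (Nat.lt_pow_self hb) (by simp at ha; omega), zero_mul]
  rw [hE, bdigit_sum hb (β * N) (fun r => bdigit b (k ⟨r % β, Nat.mod_lt _ hβ⟩) (r / β))
    (fun _ => bdigit_lt hb _ _)]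
  split_ifs with h
  · rfl
  · have h1 : N ≤ r / β := by rw [Nat.le_div_iff_mul_le hβ, mul_comm]; omega
    have h2 := hkN ⟨r % β, Nat.mod_lt _ hβ⟩
    rw [bdigit_eq_zero_of_lt hb (Nat.lt_pow_self hb) (by omega)]

lemma bdigit_Enat_block {b β : ℕ} (hb : 1 < b) (k : Fin β → ℕ) (a : ℕ) (i : Fin β) :
    bdigit b (Enat b β k) (β * a + i.1) = bdigit b (k i) a := by
  rw [bdigit_Enat hb (Nat.zero_lt_of_lt i.2)]
  simp only [block_mod, block_div]

lemma Enat_lt_iff {b β : ℕ} (hb : 1 < b) (hβ : 0 < β) (k : Fin β → ℕ) (n : ℕ) :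
    Enat b β k < b ^ (β * n) ↔ ∀ i, k i < b ^ n := by
  simp only [lt_pow_iff_bdigit hb]
  constructor
  · intro h i a ha
    rw [← bdigit_Enat_block hb k a i]
    exact h _ ((Nat.mul_le_mul_left β ha).trans (Nat.le_add_right _ _))
  · intro h r hr
    rw [bdigit_Enat hb hβ]
    exact h _ _ (by rwa [Nat.le_div_iff_mul_le hβ, mul_comm])

lemma hamming_Enat {b β : ℕ} (hb : 1 < b) (hβ : 0 < β) (k : Fin β → ℕ) :
    hamming b (Enat b β k) = ∑ i, hamming b (k i) := by
  set N := ∑ j, k j with hN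
  have hkN : ∀ j, k j < b ^ N := fun j =>
    (Finset.single_le_sum (fun _ _ => Nat.zero_le _) (Finset.mem_univ j)).trans_lt
      (Nat.lt_pow_self hb)
  rw [hamming_eq_sum hb ((Enat_lt_iff hb hβ k N).2 hkN), sum_fin_mul, Finset.sum_comm]
  simp only [bdigit_Enat_block hb]
  exact Finset.sum_congr rfl fun i _ => (hamming_eq_sum hb (hkN i)).symm

/-! ### The interlacing map on vectors -/

/-- A statement about every index of `Fin (β * s)` may be checked block by block. -/
lemma forall_fin_mul {β s : ℕ} {p : Fin (β * s) → Prop} :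
    (∀ x, p x) ↔ ∀ (j : Fin s) (i : Fin β), p ⟨β * j.1 + i.1, block_lt j i⟩ := by
  refine ⟨fun h j i => h _, fun h x => ?_⟩
  have hβ : 0 < β := Nat.pos_of_mul_pos_right (Nat.zero_lt_of_lt x.2)
  have := h ⟨x.1 / β, Nat.div_lt_of_lt_mul x.2⟩ ⟨x.1 % β, Nat.mod_lt _ hβ⟩
  simpa only [Nat.div_add_mod] using this

lemma hammingVec_Evec {b β s : ℕ} (hb : 1 < b) (hβ : 0 < β) (k : Fin (β * s) → ℕ) :
    hammingVec b (Evec b β s k) = hammingVec b k := by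
  simp only [hammingVec, Evec, hamming_Enat hb hβ]
  rw [sum_fin_mul]

lemma Evec_eq_zero_iff {b β s : ℕ} (hb : 1 < b) (hβ : 0 < β) (k : Fin (β * s) → ℕ) :
    Evec b β s k = 0 ↔ k = 0 := by
  -- the bound `Enat_lt_iff` with exponent `0` says that `E_β` vanishes only at `0`
  have h := fun j : Fin s => Enat_lt_iff hb hβ (fun i => k ⟨β * j.1 + i.1, block_lt j i⟩) 0
  simp only [mul_zero, pow_zero, Nat.lt_one_iff] at h
  rw [funext_iff, funext_iff, forall_fin_mul]
  exact forall_congr' h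

lemma exists_Evec_eq {b β s : ℕ} (hb : 1 < b) (hβ : 0 < β) (l : Fin s → ℕ) :
    ∃ k, Evec b β s k = l := by
  -- component `β j + i` collects the digits of `l j` at positions congruent to `i` modulo `β`
  refine ⟨fun x => ∑ a ∈ Finset.range (l ⟨x.1 / β, Nat.div_lt_of_lt_mul x.2⟩ + 1),
    bdigit b (l ⟨x.1 / β, Nat.div_lt_of_lt_mul x.2⟩) (β * a + x.1 % β) * b ^ a, ?_⟩
  funext j
  refine eq_of_bdigit_eq hb _ _ fun r => ?_
  rw [Evec, bdigit_Enat hb hβ]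
  have hmod := block_mod j.1 ⟨r % β, Nat.mod_lt r hβ⟩
  have hdiv := block_div j.1 ⟨r % β, Nat.mod_lt r hβ⟩
  simp only at hmod hdiv
  simp only [hmod, hdiv]
  rw [bdigit_sum hb _ (fun a => bdigit b (l j) (β * a + r % β)) (fun _ => bdigit_lt hb _ _)]
  simp only [Nat.div_add_mod]
  split_ifs with h
  · rfl
  · have := Nat.div_le_self r β
    simp only [Fin.eta] at h
    exact (bdigit_eq_zero_of_lt hb (Nat.lt_pow_self hb) (by omega)).symm

lemma sum_interlace {b β s m : ℕ} (hb : 1 < b)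
    (C : Fin (β * s) → Matrix (Fin m) (Fin m) (ZMod b)) (k : Fin (β * s) → ℕ) :
    ∑ j, ((interlace β s m C j).transpose).mulVec (trv b (β * m) (Evec b β s k j))
      = ∑ x, ((C x).transpose).mulVec (trv b m (k x)) := by
  rw [sum_fin_mul β s]
  refine Finset.sum_congr rfl fun j _ => ?_
  funext v
  simp only [Finset.sum_apply, Matrix.mulVec, dotProduct, Matrix.transpose_apply, trv]
  rw [sum_fin_mul β m, Finset.sum_comm]
  refine Finset.sum_congr rfl fun i _ => Finset.sum_congr rfl fun a _ => ?_
  simp only [Evec, bdigit_Enat_block hb, interlace, Matrix.of_apply, block_mod, block_div]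

lemma Evec_mem_dualNet_iff {b β s m : ℕ} (hb : 1 < b) (hβ : 0 < β)
    (C : Fin (β * s) → Matrix (Fin m) (Fin m) (ZMod b)) (k : Fin (β * s) → ℕ) :
    Evec b β s k ∈ dualNet b (interlace β s m C) ↔ k ∈ dualNet b C := by
  simp only [dualNet, Set.mem_ofPred_eq, sum_interlace hb]
  refine and_congr_left fun _ => ?_
  rw [forall_fin_mul]
  exact forall_congr' fun j => Enat_lt_iff hb hβ _ m

/-- If `P ⊂ [0,1)^s` is obtained from the digital net `Q ⊂ [0,1)^{βs}`
(with square `m × m` generating matrices) by digit interlacing composition with factor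
`β`, then `P⊥ = {E_β(k) : k ∈ Q⊥}`, and consequently `κ(P) = κ(Q)`. -/
theorem dual_of_interlaced (b s β m : ℕ) (hb : b.Prime) (hs : 0 < s) (hβ : 0 < β)
    (hm : 0 < m) (C : Fin (β * s) → Matrix (Fin m) (Fin m) (ZMod b)) :
    dualNet b (interlace β s m C) = Evec b β s '' dualNet b C ∧
    minHamming b (interlace β s m C) = minHamming b C := by
  have hb1 := hb.one_lt
  have hdual : dualNet b (interlace β s m C) = Evec b β s '' dualNet b C := by
    ext l
    constructor
    · intro hl
      obtain ⟨k, rfl⟩ := exists_Evec_eq hb1 hβ l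
      exact ⟨k, (Evec_mem_dualNet_iff hb1 hβ C k).1 hl, rfl⟩
    · rintro ⟨k, hk, rfl⟩
      exact (Evec_mem_dualNet_iff hb1 hβ C k).2 hk
  refine ⟨hdual, ?_⟩
  unfold minHamming
  congr 1
  ext t
  constructor
  · rintro ⟨l, ⟨hl, hl0⟩, rfl⟩
    rw [hdual] at hl
    obtain ⟨k, hk, rfl⟩ := hl
    exact ⟨k, ⟨hk, fun h => hl0 ((Evec_eq_zero_iff hb1 hβ k).2 h)⟩,
      (hammingVec_Evec hb1 hβ k).symm⟩
  · rintro ⟨k, ⟨hk, hk0⟩, rfl⟩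
    exact ⟨Evec b β s k, ⟨(Evec_mem_dualNet_iff hb1 hβ C k).2 hk,
      fun h => hk0 ((Evec_eq_zero_iff hb1 hβ k).1 h)⟩, hammingVec_Evec hb1 hβ k⟩
end
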